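/- Let X be Gamma distributed with shape k > 0 and scale θ > 0, and let G(x) = sqrt(k)·γ(x/(kθ)) where γ(x) = sign(x-1)·sqrt(2(x-1-ln x)). Then P(X ≤ x) ≥ Φ(G(x)) for all x > 0. -/

import Mathlib

/-!
The function `x ↦ Φ(G(x))` is a distribution function on `(0, ∞)`. Write `u = x / (kθ)` and
`u - 1 - log u = (u - 1)² q(u)`, so that `γ(u) = (u - 1) √(2 q(u))`. Since `γ² / 2` has derivative
`1 - 1/u`, we get `γ'(u) = 1 / (u √(2 q(u)))`. The standard Gaussian density at `G(x)` and `x` times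
the Gamma density at `x` are both constant multiples of `(u e^(1-u))^k`, so the likelihood ratio of
the two distributions is a constant times `1 / √(2 q(u))`. It is increasing in `u`, because Taylor's
formula with integral remainder gives `q(u) = ∫₀¹ (1 - s) / (1 - s + s u)² ds`. A monotone
likelihood ratio implies stochastic dominance.
-/

open MeasureTheory

noncomputable def gammaSLL (x : ℝ) : ℝ :=
  if x ≤ 1 then -Real.sqrt (2 * (x - 1 - Real.log x))
  else Real.sqrt (2 * (x - 1 - Real.log x))

noncomputable def stdGaussianCDF (t : ℝ) : ℝ :=
  ∫ x in Set.Iic t, Real.exp (-x ^ 2 / 2) / Real.sqrt (2 * Real.pi)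

open Filter Topology Set ProbabilityTheory

section LikelihoodRatio

variable {F Ψ f ρ : ℝ → ℝ} {a : ℝ}

/- Cauchy's mean value theorem on `[s, x]` and on `[x, t]` expresses the two ratios of increments of
`Ψ` and `F` as values of `ρ`. -/
lemma sub_mul_sub_le_sub_mul_sub_of_monotoneOn_ratio
    (hF : ∀ x ∈ Ioi a, HasDerivAt F (f x) x) (hΨ : ∀ x ∈ Ioi a, HasDerivAt Ψ (ρ x * f x) x)
    (hf : ∀ x ∈ Ioi a, 0 < f x) (hρ : MonotoneOn ρ (Ioi a)) {s x t : ℝ}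
    (has : a < s) (hsx : s < x) (hxt : x < t) :
    (Ψ x - Ψ s) * (F t - F x) ≤ (Ψ t - Ψ x) * (F x - F s) := by
  have increment : ∀ {y z}, a < y → y < z →
      0 ≤ F z - F y ∧ ∃ c ∈ Ioo y z, Ψ z - Ψ y = ρ c * (F z - F y) := by
    intro y z hay hyz
    have hIcc : ∀ w ∈ Icc y z, w ∈ Ioi a := fun w hw => hay.trans_le hw.1
    have hIoo : ∀ w ∈ Ioo y z, w ∈ Ioi a := fun w hw => hay.trans hw.1
    have hFc : ContinuousOn F (Icc y z) := fun w hw =>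
      (hF w (hIcc w hw)).continuousAt.continuousWithinAt
    have hΨc : ContinuousOn Ψ (Icc y z) := fun w hw =>
      (hΨ w (hIcc w hw)).continuousAt.continuousWithinAt
    obtain ⟨c, hc, hcF⟩ := exists_hasDerivAt_eq_slope F f hyz hFc fun w hw => hF w (hIoo w hw)
    obtain ⟨d, hd, hdΨ⟩ := exists_ratio_hasDerivAt_eq_ratio_slope Ψ _ hyz hΨc
      (fun w hw => hΨ w (hIoo w hw)) F f hFc fun w hw => hF w (hIoo w hw)
    refine ⟨?_, d, hd, ?_⟩
    · rw [eq_div_iff (sub_pos.2 hyz).ne'] at hcF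
      exact hcF ▸ (mul_pos (hf c (hIoo c hc)) (sub_pos.2 hyz)).le
    · refine mul_right_cancel₀ (hf d (hIoo d hd)).ne' ?_
      linarith
  obtain ⟨hF₁, c, hc, hΨ₁⟩ := increment has hsx
  obtain ⟨hF₂, d, hd, hΨ₂⟩ := increment (has.trans hsx) hxt
  have hcd : ρ c ≤ ρ d :=
    hρ (has.trans hc.1) (has.trans (hsx.trans hd.1)) (hc.2.trans hd.1).le
  calc (Ψ x - Ψ s) * (F t - F x) = ρ c * ((F x - F s) * (F t - F x)) := by rw [hΨ₁, mul_assoc]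
    _ ≤ ρ d * ((F x - F s) * (F t - F x)) := by gcongr
    _ = (Ψ t - Ψ x) * (F x - F s) := by rw [hΨ₂]; ring

lemma le_of_monotoneOn_ratio
    (hF : ∀ x ∈ Ioi a, HasDerivAt F (f x) x) (hΨ : ∀ x ∈ Ioi a, HasDerivAt Ψ (ρ x * f x) x)
    (hf : ∀ x ∈ Ioi a, 0 < f x) (hρ : MonotoneOn ρ (Ioi a)) {l m : ℝ} (hlm : l < m)
    (hFa : Tendsto F (𝓝[>] a) (𝓝 l)) (hΨa : Tendsto Ψ (𝓝[>] a) (𝓝 l))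
    (hFtop : Tendsto F atTop (𝓝 m)) (hΨtop : Tendsto Ψ atTop (𝓝 m)) {x : ℝ} (hx : a < x) :
    Ψ x ≤ F x := by
  have right_limit : ∀ s ∈ Ioo a x, (Ψ x - Ψ s) * (m - F x) ≤ (m - Ψ x) * (F x - F s) := by
    intro s hs
    refine le_of_tendsto_of_tendsto ((hFtop.sub_const _).const_mul _)
      ((hΨtop.sub_const _).mul_const _) ?_
    filter_upwards [Ioi_mem_atTop x] with t ht
    exact sub_mul_sub_le_sub_mul_sub_of_monotoneOn_ratio hF hΨ hf hρ hs.1 hs.2 ht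
  have both_limits : (Ψ x - l) * (m - F x) ≤ (m - Ψ x) * (F x - l) := by
    refine le_of_tendsto_of_tendsto ((hΨa.const_sub _).mul_const _)
      ((hFa.const_sub _).const_mul _) ?_
    filter_upwards [Ioo_mem_nhdsGT hx] with s hs using right_limit s hs
  refine le_of_mul_le_mul_right ?_ (sub_pos.2 hlm)
  linarith

end LikelihoodRatio

section Densities

lemma hasDerivAt_integral_Iic {E : Type*} [NormedAddCommGroup E] [NormedSpace ℝ E]
    [CompleteSpace E] {f : ℝ → E} {x : ℝ} (hf : Integrable f) (hx : ContinuousAt f x) :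
    HasDerivAt (fun y => ∫ t in Iic y, f t) (f x) x := by
  have hsplit : (fun y => ∫ t in Iic y, f t) =
      fun y => (∫ t in Iic 0, f t) + ∫ t in (0 : ℝ)..y, f t := by
    funext y
    rw [← intervalIntegral.integral_Iic_sub_Iic hf.integrableOn hf.integrableOn, add_sub_cancel]
  rw [hsplit]
  exact (intervalIntegral.integral_hasDerivAt_right hf.intervalIntegrable
    hf.aestronglyMeasurable.stronglyMeasurableAtFilter hx).const_add _

lemma gaussianPDFReal_zero_one (x : ℝ) :
    gaussianPDFReal 0 1 x = Real.exp (-x ^ 2 / 2) / √(2 * Real.pi) := by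
  simp [gaussianPDFReal, div_eq_inv_mul]

lemma stdGaussianCDF_eq_integral (t : ℝ) :
    stdGaussianCDF t = ∫ x in Iic t, gaussianPDFReal 0 1 x := by
  simp only [stdGaussianCDF, gaussianPDFReal_zero_one]

lemma stdGaussianCDF_eq_cdf : stdGaussianCDF = cdf (gaussianReal 0 1) := by
  funext t
  rw [cdf_eq_real, measureReal_def, gaussianReal_apply_eq_integral 0 one_ne_zero,
    ENNReal.toReal_ofReal (integral_nonneg (gaussianPDFReal_nonneg 0 1)),
    stdGaussianCDF_eq_integral]

lemma hasDerivAt_stdGaussianCDF (t : ℝ) :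
    HasDerivAt stdGaussianCDF (gaussianPDFReal 0 1 t) t := by
  have hcont : Continuous (gaussianPDFReal 0 1) := by unfold gaussianPDFReal; fun_prop
  rw [funext stdGaussianCDF_eq_integral]
  exact hasDerivAt_integral_Iic (integrable_gaussianPDFReal 0 1) hcont.continuousAt

variable {k r : ℝ}

lemma gammaPDFReal_of_nonneg (k r : ℝ) {x : ℝ} (hx : 0 ≤ x) :
    gammaPDFReal k r x = r ^ k / Real.Gamma k * x ^ (k - 1) * Real.exp (-(r * x)) :=
  if_pos hx

lemma integrable_gammaPDFReal (hk : 0 < k) (hr : 0 < r) : Integrable (gammaPDFReal k r) := by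
  refine (lintegral_ofReal_ne_top_iff_integrable
    (measurable_gammaPDFReal k r).aestronglyMeasurable
    (ae_of_all _ (gammaPDFReal_nonneg hk hr))).1 ?_
  exact (lintegral_gammaPDF_eq_one hk hr).trans_ne ENNReal.one_ne_top

lemma continuousAt_gammaPDFReal (k r : ℝ) {x : ℝ} (hx : 0 < x) :
    ContinuousAt (gammaPDFReal k r) x := by
  have hpow : ContinuousAt (fun y : ℝ => y ^ (k - 1)) x :=
    Real.continuousAt_rpow_const x (k - 1) (Or.inl hx.ne')
  have hformula : ContinuousAt
      (fun y : ℝ => r ^ k / Real.Gamma k * y ^ (k - 1) * Real.exp (-(r * y))) x := by fun_prop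
  refine hformula.congr ?_
  filter_upwards [Ioi_mem_nhds hx] with y hy using (gammaPDFReal_of_nonneg k r (le_of_lt hy)).symm

lemma hasDerivAt_cdf_gammaMeasure (hk : 0 < k) (hr : 0 < r) {x : ℝ} (hx : 0 < x) :
    HasDerivAt (cdf (gammaMeasure k r)) (gammaPDFReal k r x) x := by
  rw [funext (cdf_gammaMeasure_eq_integral hk hr)]
  exact hasDerivAt_integral_Iic (integrable_gammaPDFReal hk hr) (continuousAt_gammaPDFReal k r hx)

lemma cdf_gammaMeasure_eq_setIntegral_Ioc (hk : 0 < k) (hr : 0 < r) (x : ℝ) :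
    cdf (gammaMeasure k r) x = ∫ t in Ioc 0 x, gammaPDFReal k r t := by
  rw [cdf_gammaMeasure_eq_integral hk hr, ← integral_Icc_eq_integral_Ioc]
  have hsubset : Icc 0 x ⊆ Iic x := fun _ ht => ht.2
  refine setIntegral_eq_of_subset_of_forall_sdiff_eq_zero measurableSet_Iic hsubset fun t ht => ?_
  exact if_neg fun h0 => ht.2 ⟨h0, ht.1⟩

lemma tendsto_cdf_gammaMeasure_nhdsGT_zero (hk : 0 < k) (hr : 0 < r) :
    Tendsto (cdf (gammaMeasure k r)) (𝓝[>] 0) (𝓝 0) := by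
  have hzero : cdf (gammaMeasure k r) 0 = 0 := by
    rw [cdf_gammaMeasure_eq_setIntegral_Ioc hk hr, Ioc_self, setIntegral_empty]
  have h := (cdf (gammaMeasure k r)).right_continuous 0
  rw [ContinuousWithinAt, hzero] at h
  exact h.mono_left (nhdsWithin_mono 0 Ioi_subset_Ici_self)

end Densities

namespace gammaSLL

section Remainder

/-- The kernel of Taylor's formula with integral remainder for `u ↦ u - 1 - log u` at `1`: the
weight `1 - s` times the second derivative at the point `1 + s (u - 1)`. -/
noncomputable def remainderKernel (u s : ℝ) : ℝ := (1 - s) / (1 - s + s * u) ^ 2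

/-- The quotient of `u - 1 - log u` by `(u - 1) ^ 2`. Defining it by the integral remainder of
Taylor's formula gives the right value at `u = 1` and makes monotonicity evident. -/
noncomputable def remainderQuotient (u : ℝ) : ℝ := ∫ s in (0 : ℝ)..1, remainderKernel u s

variable {u : ℝ}

lemma one_sub_add_mul_pos (hu : 0 < u) {s : ℝ} (hs : s ∈ Icc (0 : ℝ) 1) : 0 < 1 - s + s * u := by
  rcases hs.1.eq_or_lt with rfl | hs0
  · norm_num
  · have := mul_pos hs0 hu
    linarith [hs.2]

lemma remainderKernel_nonneg (u : ℝ) {s : ℝ} (hs : s ≤ 1) : 0 ≤ remainderKernel u s :=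
  div_nonneg (sub_nonneg.2 hs) (sq_nonneg _)

lemma antitoneOn_remainderKernel {s : ℝ} (hs : s ∈ Icc (0 : ℝ) 1) :
    AntitoneOn (remainderKernel · s) (Ioi 0) := by
  intro u hu v _ huv
  have hpos := one_sub_add_mul_pos hu hs
  have hs0 := hs.1
  have hs1 := sub_nonneg.2 hs.2
  simp only [remainderKernel]
  gcongr

lemma continuousOn_remainderKernel (hu : 0 < u) :
    ContinuousOn (remainderKernel u) (Icc 0 1) :=
  (by fun_prop : Continuous fun s : ℝ => 1 - s).continuousOn.div
    (by fun_prop) fun _ hs => (pow_pos (one_sub_add_mul_pos hu hs) 2).ne'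

lemma intervalIntegrable_remainderKernel (hu : 0 < u) :
    IntervalIntegrable (remainderKernel u) volume 0 1 :=
  (continuousOn_remainderKernel hu).intervalIntegrable_of_Icc zero_le_one

lemma sub_one_sub_log_eq_sq_mul_remainderQuotient (hu : 0 < u) :
    u - 1 - Real.log u = (u - 1) ^ 2 * remainderQuotient u := by
  -- Integration by parts of `(u - 1) ^ 2` times the kernel suggests this antiderivative.
  let P : ℝ → ℝ := fun s => -((1 - s) * (u - 1)) / (1 - s + s * u) - Real.log (1 - s + s * u)
  have hderiv : ∀ s ∈ uIcc (0 : ℝ) 1, HasDerivAt P ((u - 1) ^ 2 * remainderKernel u s) s := by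
    intro s hs
    rw [uIcc_of_le zero_le_one] at hs
    have hne := (one_sub_add_mul_pos hu hs).ne'
    have hseg : HasDerivAt (fun s : ℝ => 1 - s + s * u) (-1 + 1 * u) s :=
      ((hasDerivAt_id s).const_sub 1).add ((hasDerivAt_id s).mul_const u)
    have hnum : HasDerivAt (fun s : ℝ => -((1 - s) * (u - 1))) (-(-1 * (u - 1))) s :=
      (((hasDerivAt_id s).const_sub 1).mul_const (u - 1)).neg
    refine ((hnum.div hseg hne).sub (hseg.log hne)).congr_deriv ?_
    rw [remainderKernel]
    field_simp
    ring
  have hint := intervalIntegral.integral_eq_sub_of_hasDerivAt hderiv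
    ((intervalIntegrable_remainderKernel hu).const_mul _)
  rw [intervalIntegral.integral_const_mul] at hint
  rw [remainderQuotient, hint]
  simp only [P, sub_self, zero_mul, neg_zero, one_mul, zero_add, zero_div, zero_sub, sub_zero,
    neg_sub, add_zero, div_one, Real.log_one]
  ring

lemma antitoneOn_remainderQuotient : AntitoneOn remainderQuotient (Ioi 0) :=
  fun _ hu _ hv huv => intervalIntegral.integral_mono_on zero_le_one
    (intervalIntegrable_remainderKernel hv) (intervalIntegrable_remainderKernel hu)
    fun _ hs => antitoneOn_remainderKernel hs hu hv huv

lemma remainderQuotient_pos (hu : 0 < u) : 0 < remainderQuotient u :=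
  intervalIntegral.intervalIntegral_pos_of_pos_on (intervalIntegrable_remainderKernel hu)
    (fun _ hs => div_pos (sub_pos.2 hs.2)
      (pow_pos (one_sub_add_mul_pos hu (Ioo_subset_Icc_self hs)) 2))
    zero_lt_one

lemma sqrt_two_mul_remainderQuotient_pos (hu : 0 < u) : 0 < √(2 * remainderQuotient u) :=
  Real.sqrt_pos.2 (mul_pos two_pos (remainderQuotient_pos hu))

lemma remainderQuotient_one : remainderQuotient 1 = 1 / 2 := by
  simp only [remainderQuotient, remainderKernel, mul_one, sub_add_cancel, one_pow, div_one]
  rw [intervalIntegral.integral_sub intervalIntegrable_const intervalIntegral.intervalIntegrable_id,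
    integral_id, intervalIntegral.integral_const]
  norm_num

lemma continuousAt_remainderQuotient (hu : 0 < u) : ContinuousAt remainderQuotient u := by
  refine intervalIntegral.continuousAt_of_dominated_interval
    (bound := remainderKernel (u / 2)) ?_ ?_ (intervalIntegrable_remainderKernel (half_pos hu)) ?_
  · filter_upwards [Ioi_mem_nhds hu] with v hv
    exact (intervalIntegrable_remainderKernel hv).aestronglyMeasurable_restrict_uIoc
  · filter_upwards [Ioi_mem_nhds (half_lt_self hu)] with v hv
    refine ae_of_all _ fun s hs => ?_
    have hs' : s ∈ Icc (0 : ℝ) 1 := by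
      rw [uIoc_of_le zero_le_one] at hs
      exact Ioc_subset_Icc_self hs
    rw [Real.norm_of_nonneg (remainderKernel_nonneg v hs'.2)]
    exact antitoneOn_remainderKernel hs' (half_pos hu) ((half_pos hu).trans hv) (le_of_lt hv)
  · refine ae_of_all _ fun s hs => ?_
    rw [uIoc_of_le zero_le_one] at hs
    exact continuousAt_const.div (by fun_prop)
      (pow_pos (one_sub_add_mul_pos hu (Ioc_subset_Icc_self hs)) 2).ne'

end Remainder

section SignedLogLikelihood

variable {u : ℝ}

lemma of_le_one (h : u ≤ 1) : gammaSLL u = -√(2 * (u - 1 - Real.log u)) := if_pos h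

lemma of_one_lt (h : 1 < u) : gammaSLL u = √(2 * (u - 1 - Real.log u)) := if_neg h.not_ge

lemma eq_sub_one_mul_sqrt (hu : 0 < u) :
    gammaSLL u = (u - 1) * √(2 * remainderQuotient u) := by
  have hsqrt : √(2 * (u - 1 - Real.log u)) = |u - 1| * √(2 * remainderQuotient u) := by
    rw [sub_one_sub_log_eq_sq_mul_remainderQuotient hu, mul_left_comm,
      Real.sqrt_mul (sq_nonneg _), Real.sqrt_sq_eq_abs]
  rcases le_or_gt u 1 with h | h
  · rw [of_le_one h, hsqrt, abs_of_nonpos (sub_nonpos.2 h), neg_mul, neg_neg]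
  · rw [of_one_lt h, hsqrt, abs_of_pos (sub_pos.2 h)]

lemma sq_eq (hu : 0 < u) : gammaSLL u ^ 2 = 2 * (u - 1 - Real.log u) := by
  rw [eq_sub_one_mul_sqrt hu, mul_pow, Real.sq_sqrt (by linarith [remainderQuotient_pos hu]),
    sub_one_sub_log_eq_sq_mul_remainderQuotient hu]
  ring

lemma hasDerivAt_one : HasDerivAt gammaSLL 1 1 := by
  have hlim : Tendsto (fun u => √(2 * remainderQuotient u)) (𝓝[≠] 1) (𝓝 1) := by
    have h := ((continuousAt_remainderQuotient one_pos).const_mul 2).sqrt.tendsto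
    rw [remainderQuotient_one, mul_one_div_cancel two_ne_zero, Real.sqrt_one] at h
    exact h.mono_left nhdsWithin_le_nhds
  refine hasDerivAt_iff_tendsto_slope.2 (hlim.congr' ?_)
  filter_upwards [self_mem_nhdsWithin, mem_nhdsWithin_of_mem_nhds (Ioi_mem_nhds one_pos)]
    with u hu1 hu0
  rw [slope_def_field, eq_sub_one_mul_sqrt hu0, eq_sub_one_mul_sqrt one_pos, sub_self, zero_mul,
    sub_zero, mul_div_cancel_left₀ _ (sub_ne_zero.2 hu1)]

lemma hasDerivAt_of_ne_one (hu : 0 < u) (h1 : u ≠ 1) :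
    HasDerivAt gammaSLL ((1 - u⁻¹) / gammaSLL u) u := by
  have hpos : 0 < 2 * (u - 1 - Real.log u) := by linarith [Real.log_lt_sub_one_of_pos hu h1]
  have hsqrt : HasDerivAt (fun v => √(2 * (v - 1 - Real.log v)))
      ((1 - u⁻¹) / √(2 * (u - 1 - Real.log u))) u := by
    have h := ((((hasDerivAt_id u).sub_const 1).sub
      (Real.hasDerivAt_log hu.ne')).const_mul 2).sqrt hpos.ne'
    exact h.congr_deriv (mul_div_mul_left _ _ two_ne_zero)
  rcases lt_or_gt_of_ne h1 with h | h
  · rw [of_le_one h.le, div_neg]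
    refine hsqrt.neg.congr_of_eventuallyEq ?_
    filter_upwards [Iio_mem_nhds h] with v hv using of_le_one (le_of_lt hv)
  · rw [of_one_lt h]
    refine hsqrt.congr_of_eventuallyEq ?_
    filter_upwards [Ioi_mem_nhds h] with v hv using of_one_lt hv

lemma hasDerivAt (hu : 0 < u) :
    HasDerivAt gammaSLL (u * √(2 * remainderQuotient u))⁻¹ u := by
  rcases eq_or_ne u 1 with rfl | h1
  · simpa [remainderQuotient_one] using hasDerivAt_one
  · refine (hasDerivAt_of_ne_one hu h1).congr_deriv ?_
    have hsub : u - 1 ≠ 0 := sub_ne_zero.2 h1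
    have hq := sqrt_two_mul_remainderQuotient_pos hu
    rw [eq_sub_one_mul_sqrt hu]
    field_simp

lemma tendsto_nhdsGT_zero : Tendsto gammaSLL (𝓝[>] 0) atBot := by
  have hsub : Tendsto (fun u : ℝ => u - 1) (𝓝[>] 0) (𝓝 (0 - 1)) :=
    ((continuous_sub_right 1).tendsto 0).mono_left nhdsWithin_le_nhds
  have hlog : Tendsto (fun u => 2 * (u - 1 - Real.log u)) (𝓝[>] 0) atTop := by
    simpa only [sub_eq_add_neg, Function.comp_apply] using (hsub.add_atTop
      (tendsto_neg_atBot_atTop.comp Real.tendsto_log_nhdsGT_zero)).const_mul_atTop two_pos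
  refine (tendsto_neg_atTop_atBot.comp (Real.tendsto_sqrt_atTop.comp hlog)).congr' ?_
  filter_upwards [Ioo_mem_nhdsGT one_pos] with u hu using (of_le_one hu.2.le).symm

lemma tendsto_atTop : Tendsto gammaSLL atTop atTop := by
  have hlog : Tendsto (fun u => 2 * (u - 1 - Real.log u)) atTop atTop := by
    have h := (Asymptotics.IsEquivalent.refl.sub_isLittleO
      Real.isLittleO_log_id_atTop).symm.tendsto_atTop tendsto_id
    refine ((tendsto_atTop_add_const_right _ (-1) h).const_mul_atTop two_pos).congr fun u => ?_
    simp only [Pi.sub_apply, id_eq]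
    ring
  refine (Real.tendsto_sqrt_atTop.comp hlog).congr' ?_
  filter_upwards [Ioi_mem_atTop 1] with u hu using (of_one_lt hu).symm

end SignedLogLikelihood

section GammaDistribution

/-- The ratio of `Γ(k)` to its Stirling approximation `√(2π / k) (k / e) ^ k`. -/
noncomputable def stirlingRatio (k : ℝ) : ℝ :=
  Real.Gamma k * √k / (√(2 * Real.pi) * k ^ k * Real.exp (-k))

/-- The likelihood ratio, at the point `x`, of the distribution with distribution function
`x ↦ Φ(G(x))` to the Gamma distribution with shape `k` and scale `θ`. -/
noncomputable def likelihoodRatio (k θ x : ℝ) : ℝ :=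
  stirlingRatio k / √(2 * remainderQuotient (x / (k * θ)))

variable {k θ x : ℝ}

lemma gaussianPDFReal_sqrt_mul (hk : 0 ≤ k) {u : ℝ} (hu : 0 < u) :
    gaussianPDFReal 0 1 (√k * gammaSLL u) =
      (u * Real.exp (1 - u)) ^ k / √(2 * Real.pi) := by
  rw [gaussianPDFReal_zero_one, mul_pow, Real.sq_sqrt hk, sq_eq hu,
    Real.rpow_def_of_pos (by positivity), Real.log_mul hu.ne' (Real.exp_ne_zero _), Real.log_exp]
  congr 2
  ring

lemma gammaPDFReal_eq_rpow_div (hk : 0 < k) (hθ : 0 < θ) (hx : 0 < x) :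
    gammaPDFReal k θ⁻¹ x = k ^ k * Real.exp (-k) / Real.Gamma k *
      ((x / (k * θ)) * Real.exp (1 - x / (k * θ))) ^ k / x := by
  have hexp : Real.exp (-(θ⁻¹ * x)) = Real.exp (-k) * Real.exp (1 - x / (k * θ)) ^ k := by
    rw [← Real.exp_mul, ← Real.exp_add]
    congr 1
    field_simp
    ring
  rw [gammaPDFReal_of_nonneg k θ⁻¹ hx.le, hexp, Real.mul_rpow (by positivity) (by positivity),
    Real.div_rpow hx.le (by positivity), Real.mul_rpow hk.le hθ.le, Real.inv_rpow hθ.le,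
    Real.rpow_sub_one hx.ne']
  field_simp [(Real.Gamma_pos_of_pos hk).ne']

lemma stirlingRatio_nonneg (hk : 0 < k) : 0 ≤ stirlingRatio k := by
  have := Real.Gamma_pos_of_pos hk
  unfold stirlingRatio
  positivity

lemma monotoneOn_likelihoodRatio (hk : 0 < k) (hθ : 0 < θ) :
    MonotoneOn (likelihoodRatio k θ) (Ioi 0) := by
  intro x hx y hy hxy
  have hkθ := mul_pos hk hθ
  have hv := div_pos hy hkθ
  have hq := antitoneOn_remainderQuotient (div_pos hx hkθ) hv
    (div_le_div_of_nonneg_right hxy hkθ.le)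
  exact div_le_div_of_nonneg_left (stirlingRatio_nonneg hk)
    (sqrt_two_mul_remainderQuotient_pos hv) (by gcongr)

lemma hasDerivAt_stdGaussianCDF_comp (hk : 0 < k) (hθ : 0 < θ) (hx : 0 < x) :
    HasDerivAt (fun y => stdGaussianCDF (√k * gammaSLL (y / (k * θ))))
      (likelihoodRatio k θ x * gammaPDFReal k θ⁻¹ x) x := by
  have hu : 0 < x / (k * θ) := by positivity
  have hG : HasDerivAt (fun y => √k * gammaSLL (y / (k * θ)))
      (√k * ((x / (k * θ) * √(2 * remainderQuotient (x / (k * θ))))⁻¹ * (1 / (k * θ)))) x :=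
    (HasDerivAt.comp x (hasDerivAt hu) ((hasDerivAt_id x).div_const (k * θ))).const_mul √k
  refine ((hasDerivAt_stdGaussianCDF _).comp x hG).congr_deriv ?_
  have hq := sqrt_two_mul_remainderQuotient_pos hu
  rw [gaussianPDFReal_sqrt_mul hk.le hu, gammaPDFReal_eq_rpow_div hk hθ hx, likelihoodRatio,
    stirlingRatio]
  generalize √(2 * remainderQuotient (x / (k * θ))) = q at hq ⊢
  generalize (x / (k * θ) * Real.exp (1 - x / (k * θ))) ^ k = w
  field_simp [(Real.Gamma_pos_of_pos hk).ne']

lemma tendsto_stdGaussianCDF_comp_nhdsGT_zero (hk : 0 < k) (hθ : 0 < θ) :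
    Tendsto (fun y => stdGaussianCDF (√k * gammaSLL (y / (k * θ)))) (𝓝[>] 0) (𝓝 0) := by
  have hdiv : Tendsto (fun y => y / (k * θ)) (𝓝[>] 0) (𝓝[>] 0) := by
    have h := (continuous_id.div_const (k * θ)).continuousWithinAt.tendsto_nhdsWithin
      (s := Ioi 0) (x := 0) (t := Ioi 0) fun y hy => div_pos hy (mul_pos hk hθ)
    simpa using h
  rw [stdGaussianCDF_eq_cdf]
  exact (tendsto_cdf_atBot _).comp
    ((tendsto_nhdsGT_zero.comp hdiv).const_mul_atBot (Real.sqrt_pos.2 hk))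

lemma tendsto_stdGaussianCDF_comp_atTop (hk : 0 < k) (hθ : 0 < θ) :
    Tendsto (fun y => stdGaussianCDF (√k * gammaSLL (y / (k * θ)))) atTop (𝓝 1) := by
  rw [stdGaussianCDF_eq_cdf]
  exact (tendsto_cdf_atTop _).comp ((tendsto_atTop.comp
    (tendsto_id.atTop_div_const (mul_pos hk hθ))).const_mul_atTop (Real.sqrt_pos.2 hk))

lemma cdf_gammaMeasure_inv_eq_setIntegral (hk : 0 < k) (hθ : 0 < θ) (x : ℝ) :
    cdf (gammaMeasure k θ⁻¹) x =
      ∫ t in Ioc 0 x, t ^ (k - 1) * Real.exp (-t / θ) / (θ ^ k * Real.Gamma k) := by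
  rw [cdf_gammaMeasure_eq_setIntegral_Ioc hk (inv_pos.2 hθ)]
  refine setIntegral_congr_fun measurableSet_Ioc fun t ht => ?_
  have harg : -(θ⁻¹ * t) = -t / θ := by ring
  simp only [gammaPDFReal_of_nonneg k θ⁻¹ ht.1.le, Real.inv_rpow hθ.le, harg]
  field_simp

end GammaDistribution

end gammaSLL

theorem gamma_sll_dominated (k θ x : ℝ) (hk : 0 < k) (hθ : 0 < θ) (hx : 0 < x) :
    stdGaussianCDF (Real.sqrt k * gammaSLL (x / (k * θ))) ≤
      ∫ t in Set.Ioc (0 : ℝ) x,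
        t ^ (k - 1) * Real.exp (-t / θ) / (θ ^ k * Real.Gamma k) := by
  have hr : 0 < θ⁻¹ := inv_pos.2 hθ
  rw [← gammaSLL.cdf_gammaMeasure_inv_eq_setIntegral hk hθ]
  exact le_of_monotoneOn_ratio
    (fun _ hy => hasDerivAt_cdf_gammaMeasure hk hr hy)
    (fun _ hy => gammaSLL.hasDerivAt_stdGaussianCDF_comp hk hθ hy)
    (fun _ hy => gammaPDFReal_pos hk hr hy)
    (gammaSLL.monotoneOn_likelihoodRatio hk hθ) zero_lt_one
    (tendsto_cdf_gammaMeasure_nhdsGT_zero hk hr)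
    (gammaSLL.tendsto_stdGaussianCDF_comp_nhdsGT_zero hk hθ)
    (tendsto_cdf_atTop _)
    (gammaSLL.tendsto_stdGaussianCDF_comp_atTop hk hθ) hx
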